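/- Let H be a non-abelian simple subgroup of a finite non-abelian simple group G, and assume that both H and G are complete groups (trivial center and every automorphism inner). Then the inclusion i : H ↪ G is a localization if and only if: (1) every subgroup of G isomorphic to H is conjugate to H by an element of G; and (2) the centralizer C_G(H) is trivial. -/

import Mathlib

/-- A group homomorphism `φ : H →* G` is a localization if precomposition with `φ`
induces a bijection `Hom(G,G) ≃ Hom(H,G)`. -/
def IsLocalizationHom {H G : Type*} [Group H] [Group G] (φ : H →* G) : Prop :=
  Function.Bijective fun ψ : G →* G => ψ.comp φ

/-!
If every nontrivial endomorphism of `G` is an automorphism, then a nontrivial homomorphism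
`K →* G` extends along an embedding `φ : K →* G` exactly when it is `φ` followed by an
automorphism of `G`. Uniqueness of the extension says that no nontrivial automorphism of `G`
fixes the image of `φ` pointwise. For existence, an embedding `f` of a simple group `K` is
determined by its image and an automorphism of `K`, so it suffices to move the image of `φ` to
that of `f` and to extend the automorphisms of `K` to `G`. When `G` is complete, `G ≃ Aut G` by
conjugation, and the pointwise stabilizer of `H` in `Aut G` becomes the centralizer of `H`.
-/

open Function

section Precomposition

variable {K G : Type*} [Group K] [Group G]

theorem eq_one_or_injective_of_isSimpleGroup [IsSimpleGroup K] (f : K →* G) :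
    f = 1 ∨ Injective f :=
  f.normal_ker.eq_bot_or_eq_top.symm.imp f.ker_eq_top_iff.1 f.ker_eq_bot_iff.1

theorem eq_one_or_bijective_of_finite_of_isSimpleGroup [Finite G] [IsSimpleGroup G]
    (ψ : G →* G) : ψ = 1 ∨ Bijective ψ :=
  (eq_one_or_injective_of_isSimpleGroup ψ).imp_right Finite.injective_iff_bijective.1

theorem ne_one_of_injective [Nontrivial K] {f : K →* G} (hf : Injective f) : f ≠ 1 := by
  rintro rfl
  exact not_injective_const hf

theorem exists_mulAut_comp_eq_of_range_eq {f₁ f₂ : K →* G} (hf₁ : Injective f₁)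
    (hf₂ : Injective f₂) (hrange : f₁.range = f₂.range) :
    ∃ α : MulAut K, f₂.comp α.toMonoidHom = f₁ := by
  refine ⟨(MonoidHom.ofInjective hf₁).trans
    ((MulEquiv.subgroupCongr hrange).trans (MonoidHom.ofInjective hf₂).symm), ?_⟩
  ext x
  simp [MonoidHom.ofInjective_apply]

theorem exists_mulAut_of_comp_ne_one (hEnd : ∀ ψ : G →* G, ψ = 1 ∨ Bijective ψ) {φ : K →* G}
    {ψ : G →* G} (hψ : ψ.comp φ ≠ 1) : ∃ β : MulAut G, β.toMonoidHom = ψ := by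
  have hbij : Bijective ψ := (hEnd ψ).resolve_left fun h => hψ (by rw [h, MonoidHom.one_comp])
  exact ⟨MulEquiv.ofBijective ψ hbij, rfl⟩

theorem eq_one_of_comp_eq_one (hEnd : ∀ ψ : G →* G, ψ = 1 ∨ Bijective ψ) {φ : K →* G}
    (hφ : φ ≠ 1) {ψ : G →* G} (hψ : ψ.comp φ = 1) : ψ = 1 :=
  (hEnd ψ).resolve_right fun hbij =>
    hφ ((MonoidHom.cancel_left hbij.injective).1 (hψ.trans ψ.comp_one.symm))

theorem mulAut_comp_eq_comp_iff {φ : K →* G} {β₁ β₂ : MulAut G} :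
    β₁.toMonoidHom.comp φ = β₂.toMonoidHom.comp φ ↔
      β₂⁻¹ * β₁ ∈ fixingSubgroup (MulAut G) (φ.range : Set G) := by
  simp [MonoidHom.ext_iff, mem_fixingSubgroup_iff, MulEquiv.symm_apply_eq]

theorem precomp_injective_iff (hEnd : ∀ ψ : G →* G, ψ = 1 ∨ Bijective ψ) {φ : K →* G}
    (hφ : φ ≠ 1) :
    Injective (fun ψ : G →* G => ψ.comp φ) ↔
      fixingSubgroup (MulAut G) (φ.range : Set G) = ⊥ := by
  constructor
  · intro hinj
    refine (Subgroup.eq_bot_iff_forall _).2 fun β hβ => ?_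
    have hcomp : β.toMonoidHom.comp φ = (1 : MulAut G).toMonoidHom.comp φ :=
      mulAut_comp_eq_comp_iff.2 (by simpa using hβ)
    exact MulEquiv.toMonoidHom_injective (hinj hcomp)
  · intro hfix ψ₁ ψ₂ (hcomp : ψ₁.comp φ = ψ₂.comp φ)
    by_cases hone : ψ₁.comp φ = 1
    · rw [eq_one_of_comp_eq_one hEnd hφ hone,
        eq_one_of_comp_eq_one hEnd hφ (hcomp.symm.trans hone)]
    · obtain ⟨β₁, rfl⟩ := exists_mulAut_of_comp_ne_one hEnd hone
      obtain ⟨β₂, rfl⟩ := exists_mulAut_of_comp_ne_one hEnd (hcomp ▸ hone)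
      have hmem := mulAut_comp_eq_comp_iff.1 hcomp
      rw [hfix, Subgroup.mem_bot, inv_mul_eq_one] at hmem
      rw [hmem]

theorem exists_mulAut_comp_eq_of_precomp_surjective [Nontrivial K]
    (hEnd : ∀ ψ : G →* G, ψ = 1 ∨ Bijective ψ) {φ : K →* G}
    (hsurj : Surjective fun ψ : G →* G => ψ.comp φ) {f : K →* G} (hf : Injective f) :
    ∃ β : MulAut G, β.toMonoidHom.comp φ = f := by
  obtain ⟨ψ, hψ : ψ.comp φ = f⟩ := hsurj f
  obtain ⟨β, rfl⟩ := exists_mulAut_of_comp_ne_one hEnd (hψ ▸ ne_one_of_injective hf)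
  exact ⟨β, hψ⟩

theorem precomp_surjective_of_exists_mulAut [IsSimpleGroup K] {φ : K →* G} (hφ : Injective φ)
    (hconj : ∀ H' : Subgroup G, Nonempty (H' ≃* K) →
      ∃ β : MulAut G, φ.range.map β.toMonoidHom = H')
    (hext : ∀ α : MulAut K, ∃ β : MulAut G, β.toMonoidHom.comp φ = φ.comp α.toMonoidHom) :
    Surjective fun ψ : G →* G => ψ.comp φ := by
  intro f
  obtain rfl | hf := eq_one_or_injective_of_isSimpleGroup f
  · exact ⟨1, φ.one_comp⟩
  obtain ⟨β, hβ⟩ := hconj f.range ⟨(MonoidHom.ofInjective hf).symm⟩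
  have hrange : f.range = (β.toMonoidHom.comp φ).range := by rw [MonoidHom.range_comp, hβ]
  obtain ⟨α, hα⟩ := exists_mulAut_comp_eq_of_range_eq hf (β.injective.comp hφ) hrange
  obtain ⟨γ, hγ⟩ := hext α
  refine ⟨β.toMonoidHom.comp γ.toMonoidHom, ?_⟩
  calc (β.toMonoidHom.comp γ.toMonoidHom).comp φ
      = β.toMonoidHom.comp (φ.comp α.toMonoidHom) := by rw [MonoidHom.comp_assoc, hγ]
    _ = f := hα

theorem precomp_surjective_iff [IsSimpleGroup K]
    (hEnd : ∀ ψ : G →* G, ψ = 1 ∨ Bijective ψ) {φ : K →* G} (hφ : Injective φ) :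
    Surjective (fun ψ : G →* G => ψ.comp φ) ↔
      (∀ H' : Subgroup G, Nonempty (H' ≃* K) →
        ∃ β : MulAut G, φ.range.map β.toMonoidHom = H') ∧
      ∀ α : MulAut K, ∃ β : MulAut G, β.toMonoidHom.comp φ = φ.comp α.toMonoidHom := by
  refine ⟨fun hsurj => ⟨?_, fun α => ?_⟩,
    fun ⟨hconj, hext⟩ => precomp_surjective_of_exists_mulAut hφ hconj hext⟩
  · rintro H' ⟨e⟩
    obtain ⟨β, hβ⟩ := exists_mulAut_comp_eq_of_precomp_surjective hEnd hsurj
      (f := H'.subtype.comp e.symm.toMonoidHom) (H'.subtype_injective.comp e.symm.injective)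
    refine ⟨β, ?_⟩
    rw [← MonoidHom.range_comp, hβ, MonoidHom.range_comp,
      MonoidHom.range_eq_top.2 e.symm.surjective, ← MonoidHom.range_eq_map, H'.range_subtype]
  · exact exists_mulAut_comp_eq_of_precomp_surjective hEnd hsurj (hφ.comp α.injective)

end Precomposition

section Conjugation

variable {G : Type*} [Group G]

theorem comap_conj_fixingSubgroup (s : Set G) :
    (fixingSubgroup (MulAut G) s).comap MulAut.conj = Subgroup.centralizer s := by
  ext g
  simp [mem_fixingSubgroup_iff, Subgroup.mem_centralizer_iff, eq_mul_inv_iff_mul_eq, eq_comm]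

theorem ker_conj : (MulAut.conj : G →* MulAut G).ker = Subgroup.center G := by
  ext g
  simp [MonoidHom.mem_ker, MulEquiv.ext_iff, Subgroup.mem_center_iff, eq_mul_inv_iff_mul_eq,
    eq_comm]

theorem fixingSubgroup_eq_bot_iff_centralizer_eq_center
    (hInn : Surjective (MulAut.conj : G →* MulAut G)) (s : Set G) :
    fixingSubgroup (MulAut G) s = ⊥ ↔ Subgroup.centralizer s = Subgroup.center G := by
  rw [← comap_conj_fixingSubgroup, ← ker_conj, ← MonoidHom.comap_bot,
    (Subgroup.comap_injective hInn).eq_iff]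

theorem exists_mulAut_comp_subtype_eq_of_conj_surjective {H : Subgroup G}
    (hInn : Surjective (MulAut.conj : H →* MulAut H)) (α : MulAut H) :
    ∃ β : MulAut G, β.toMonoidHom.comp H.subtype = H.subtype.comp α.toMonoidHom := by
  obtain ⟨h, rfl⟩ := hInn α
  exact ⟨MulAut.conj (h : G), rfl⟩

end Conjugation

theorem statement4_general {G : Type*} [Group G] (hEnd : ∀ ψ : G →* G, ψ = 1 ∨ Bijective ψ)
    (H : Subgroup G) [IsSimpleGroup H] :
    IsLocalizationHom H.subtype ↔
      ((∀ H' : Subgroup G, Nonempty (H' ≃* H) →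
          ∃ β : MulAut G, H.map β.toMonoidHom = H') ∧
        ∀ α : MulAut H, ∃ β : MulAut G,
          β.toMonoidHom.comp H.subtype = H.subtype.comp α.toMonoidHom) ∧
      fixingSubgroup (MulAut G) (H : Set G) = ⊥ := by
  have hinj := precomp_injective_iff hEnd (ne_one_of_injective H.subtype_injective)
  have hsurj := precomp_surjective_iff hEnd H.subtype_injective
  rw [H.range_subtype] at hinj hsurj
  exact (and_congr hinj hsurj).trans and_comm

/-- If `H` is a non-abelian simple subgroup of a finite non-abelian simple
group `G` and both `H` and `G` are complete (trivial centre, all automorphisms inner),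
then the inclusion is a localization iff every subgroup of `G` isomorphic to `H` is
conjugate to `H` in `G` and `C_G(H) = 1`. -/
theorem statement4 (G : Type*) [Group G] [Finite G] [IsSimpleGroup G]
    (hG : ¬ ∀ a b : G, a * b = b * a)
    (H : Subgroup G) [IsSimpleGroup H]
    (hH : ¬ ∀ a b : H, a * b = b * a)
    (hHcomplete : Subgroup.center H = ⊥ ∧ ∀ α : MulAut H, ∃ h : H, α = MulAut.conj h)
    (hGcomplete : Subgroup.center G = ⊥ ∧ ∀ α : MulAut G, ∃ g : G, α = MulAut.conj g) :
    IsLocalizationHom H.subtype ↔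
      ((∀ H' : Subgroup G, Nonempty (H' ≃* H) →
          ∃ g : G, H.map (MulAut.conj g).toMonoidHom = H') ∧
       Subgroup.centralizer (H : Set G) = ⊥) := by
  have hInnH : Surjective (MulAut.conj : H →* MulAut H) := fun α =>
    (hHcomplete.2 α).imp fun _ => Eq.symm
  have hInnG : Surjective (MulAut.conj : G →* MulAut G) := fun α =>
    (hGcomplete.2 α).imp fun _ => Eq.symm
  rw [statement4_general eq_one_or_bijective_of_finite_of_isSimpleGroup,
    and_iff_left (exists_mulAut_comp_subtype_eq_of_conj_surjective hInnH),
    fixingSubgroup_eq_bot_iff_centralizer_eq_center hInnG, hGcomplete.1]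
  simp only [hInnG.exists]
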